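/- Let p_1,…,p_m be real numbers with Σ_{i=1}^{m} p_i = 1. Then Σ_{i=1}^{m} p_i³ − (Σ_{i=1}^{m} p_i²)² = Σ_{1 ≤ i < j ≤ m} p_i·p_j·(p_i − p_j)². -/

import Mathlib

/-!
The weighted Lagrange identity
`(∑ wᵢ) (∑ wᵢ xᵢ²) - (∑ wᵢ xᵢ)² = ∑_{i < j} wᵢ wⱼ (xᵢ - xⱼ)²` expresses a variance through pairwise
differences. The cubic identity is its case `w = x = p`: the variance of the weights under the
distribution they define. Pairing `(i, j)` with `(j, i)` in the double sum, rather than symmetrising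
and halving it, keeps the argument valid in every commutative ring.
-/

open Finset

section DoubleSum

variable {ι M : Type*} [LinearOrder ι] [AddCommMonoid M]

theorem sum_eq_add_sum_lt_add_sum_gt {s : Finset ι} {i : ι} (hi : i ∈ s) (f : ι → M) :
    ∑ j ∈ s, f j = f i + (∑ j ∈ s with i < j, f j + ∑ j ∈ s with j < i, f j) := by
  have erase_eq : s.erase i = {j ∈ s | i < j ∨ j < i} := by
    ext j
    simp only [mem_erase, mem_filter, ← ne_iff_lt_or_gt, ne_comm, and_comm]
  have disjoint_lt_gt : Disjoint {j ∈ s | i < j} {j ∈ s | j < i} :=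
    disjoint_filter.2 fun _ _ hij ↦ hij.not_gt
  rw [← add_sum_erase s f hi, erase_eq, filter_or, sum_union disjoint_lt_gt]

theorem sum_sum_gt_eq_sum_sum_lt (s : Finset ι) (f : ι → ι → M) :
    ∑ i ∈ s, ∑ j ∈ s with j < i, f i j = ∑ i ∈ s, ∑ j ∈ s with i < j, f j i := by
  simp only [sum_filter]
  exact sum_comm

theorem sum_sum_eq_sum_diag_add_sum_sum_lt (s : Finset ι) (f : ι → ι → M) :
    ∑ i ∈ s, ∑ j ∈ s, f i j =
      ∑ i ∈ s, f i i + ∑ i ∈ s, ∑ j ∈ s with i < j, (f i j + f j i) := by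
  rw [sum_congr rfl fun i hi ↦ sum_eq_add_sum_lt_add_sum_gt hi (f i)]
  simp only [sum_add_distrib, sum_sum_gt_eq_sum_sum_lt]

end DoubleSum

section Lagrange

variable {ι R : Type*} [LinearOrder ι] [CommRing R]

theorem sum_mul_sum_mul_sq_sub_sq_sum_mul (s : Finset ι) (w x : ι → R) :
    (∑ i ∈ s, w i) * ∑ i ∈ s, w i * x i ^ 2 - (∑ i ∈ s, w i * x i) ^ 2 =
      ∑ i ∈ s, ∑ j ∈ s with i < j, w i * w j * (x i - x j) ^ 2 := by
  calc (∑ i ∈ s, w i) * ∑ i ∈ s, w i * x i ^ 2 - (∑ i ∈ s, w i * x i) ^ 2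
      = ∑ i ∈ s, ∑ j ∈ s, (w i * (w j * x j ^ 2) - w i * x i * (w j * x j)) := by
        simp only [sq (∑ i ∈ s, w i * x i), sum_mul_sum, sum_sub_distrib]
    _ = ∑ i ∈ s, (w i * (w i * x i ^ 2) - w i * x i * (w i * x i)) +
          ∑ i ∈ s, ∑ j ∈ s with i < j,
            ((w i * (w j * x j ^ 2) - w i * x i * (w j * x j)) +
              (w j * (w i * x i ^ 2) - w j * x j * (w i * x i))) :=
        sum_sum_eq_sum_diag_add_sum_sum_lt s _
    _ = 0 + ∑ i ∈ s, ∑ j ∈ s with i < j, w i * w j * (x i - x j) ^ 2 := by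
        congr 1
        · exact sum_eq_zero fun i _ ↦ by ring
        · exact sum_congr rfl fun i _ ↦ sum_congr rfl fun j _ ↦ by ring
    _ = ∑ i ∈ s, ∑ j ∈ s with i < j, w i * w j * (x i - x j) ^ 2 := zero_add _

theorem cubic_identity_general (s : Finset ι) (p : ι → R) (hp : ∑ i ∈ s, p i = 1) :
    (∑ i ∈ s, p i ^ 3) - (∑ i ∈ s, p i ^ 2) ^ 2 =
      ∑ i ∈ s, ∑ j ∈ s with i < j, p i * p j * (p i - p j) ^ 2 := by
  have lagrange := sum_mul_sum_mul_sq_sub_sq_sum_mul s p p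
  simpa only [hp, one_mul, ← pow_succ', ← sq] using lagrange

end Lagrange

/-- If `p_1 + ⋯ + p_m = 1`, then
`Σ p_i³ − (Σ p_i²)² = Σ_{i<j} p_i p_j (p_i − p_j)²`. -/
theorem cubic_identity (m : ℕ) (p : Fin m → ℝ) (hp : ∑ i, p i = 1) :
    (∑ i, p i ^ 3) - (∑ i, p i ^ 2) ^ 2 =
      ∑ i : Fin m, ∑ j ∈ Finset.univ.filter (fun j => i < j),
        p i * p j * (p i - p j) ^ 2 :=
  cubic_identity_general univ p hp
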